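/- The spectrum of U(s,r,s) as a bounded operator on bv_p (1 < p < ∞) equals [r − 2s, r + 2s] = {r + 2s·cos θ : θ ∈ [0, 2π]}, and coincides entirely with the continuous spectrum (the point and residual spectra being empty). -/

import Mathlib

open scoped ENNReal

/-- The backward difference (Δ x)_k = x_k − x_{k−1}, with x_{-1} = 0. -/
noncomputable def dL (x : ℕ → ℂ) : ℕ → ℂ :=
  fun k => x k - (if k = 0 then 0 else x (k - 1))

/-- The submodule of sequences x with Δx ∈ ℓ_p, i.e. bv_p. -/
noncomputable def bvSubmodule (p : ℝ≥0∞) : Submodule ℂ (ℕ → ℂ) where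
  carrier := {x | Memℓp (dL x) p}
  add_mem' := by
    intro a b ha hb
    have h : dL (a + b) = dL a + dL b := by
      funext k; simp only [dL, Pi.add_apply, Pi.smul_apply, smul_eq_mul]; split_ifs <;> ring
    simpa [Set.mem_setOf_eq, h] using ha.add hb
  zero_mem' := by
    have h : dL 0 = 0 := by funext k; simp [dL]
    simpa [Set.mem_setOf_eq, h] using zero_memℓp
  smul_mem' := by
    intro c a ha
    have h : dL (c • a) = c • dL a := by
      funext k; simp only [dL, Pi.add_apply, Pi.smul_apply, smul_eq_mul]; split_ifs <;> ring
    simpa [Set.mem_setOf_eq, h] using ha.const_smul c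

/-- The space bv_p as a type. -/
noncomputable def BV (p : ℝ≥0∞) := ↥(bvSubmodule p)

noncomputable instance (p : ℝ≥0∞) : AddCommGroup (BV p) :=
  inferInstanceAs (AddCommGroup ↥(bvSubmodule p))
noncomputable instance (p : ℝ≥0∞) : Module ℂ (BV p) :=
  inferInstanceAs (Module ℂ ↥(bvSubmodule p))

/-- The difference map bv_p → ℓ_p as a linear map. -/
noncomputable def dLhat (p : ℝ≥0∞) : BV p →ₗ[ℂ] lp (fun _ : ℕ => ℂ) p where
  toFun x := ⟨dL x.1, x.2⟩
  map_add' a b := by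
    ext k
    show dL (a.1 + b.1) k = dL a.1 k + dL b.1 k
    simp only [dL, Pi.add_apply]
    split_ifs <;> ring
  map_smul' c a := by
    ext k
    show dL (c • a.1) k = c * dL a.1 k
    simp only [dL, Pi.smul_apply, smul_eq_mul]
    split_ifs <;> ring

theorem dLhat_injective (p : ℝ≥0∞) : Function.Injective (dLhat p) := by
  intro x y h
  have hd : dL x.1 = dL y.1 := congrArg Subtype.val h
  have : ∀ n, x.1 n = y.1 n := by
    intro n
    induction n with
    | zero =>
        have := congrFun hd 0
        simpa [dL] using this
    | succ n ih =>
        have := congrFun hd (n + 1)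
        simp [dL] at this
        linear_combination this + ih
  exact Subtype.ext (funext this)

/-- bv_p with the norm ‖x‖ = ‖Δx‖_{ℓ_p}, induced along the difference map. -/
noncomputable instance (p : ℝ≥0∞) [Fact (1 ≤ p)] : NormedAddCommGroup (BV p) :=
  NormedAddCommGroup.induced (BV p) (lp (fun _ : ℕ => ℂ) p) (dLhat p) (dLhat_injective p)

noncomputable instance (p : ℝ≥0∞) [Fact (1 ≤ p)] : NormedSpace ℂ (BV p) :=
  NormedSpace.induced ℂ (BV p) (lp (fun _ : ℕ => ℂ) p) (dLhat p)

open Real Set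

/-- The tridiagonal operator U(s,r,s) acting on sequences, with x_{-1} = 0. -/
noncomputable def Ufun (s r : ℂ) (x : ℕ → ℂ) : ℕ → ℂ :=
  fun k => (if k = 0 then 0 else s * x (k - 1)) + r * x k + s * x (k + 1)

/-! The difference operator is an isometry of `bv_p` onto `ℓ^p` carrying `U(s, r, s)` to
`r + s A`, where `A = S + L + P` is the sum of the right shift, the left shift and the projection
onto the zeroth coordinate. Write `μ = z + z⁻¹` with `0 < ‖z‖ ≤ 1`. If `‖z‖ < 1`, then
`A - μ = -z⁻¹ (1 - z L) (1 - z P) (1 - z S)`, and Neumann series invert the three factors. If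
`‖z‖ = 1`, a solution of `y (k + 2) = μ y (k + 1) - y k` tending to `0` vanishes. Applied to the
elements of `ℓ^p`, this makes `A - μ` injective and keeps the zeroth basis vector out of its
range; applied to the coefficients of a functional vanishing on the range, which tend to `0` as
they lie in `ℓ^q` for the exponent `q` conjugate to `p`, it makes the range dense. -/

open Filter Topology Metric
open scoped lp

section Recurrence

variable {𝕜 E : Type*} [NormedField 𝕜] [NormedAddCommGroup E] [NormedSpace 𝕜 E]

theorem eq_zero_of_tendsto_zero_of_succ_eq_smul {y : ℕ → E} {a : 𝕜} (ha : 1 ≤ ‖a‖)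
    (hy : ∀ k, y (k + 1) = a • y k) (hlim : Tendsto y atTop (𝓝 0)) : y = 0 := by
  have hmono : Monotone fun k => ‖y k‖ := monotone_nat_of_le_succ fun k => by
    rw [hy, norm_smul]
    exact le_mul_of_one_le_left (norm_nonneg _) ha
  funext k
  exact norm_le_zero_iff.1 (hmono.ge_of_tendsto (tendsto_zero_iff_norm_tendsto_zero.1 hlim) k)

theorem eq_zero_of_tendsto_zero_of_linear_recurrence {y : ℕ → E} {a b : 𝕜} (ha : 1 ≤ ‖a‖)
    (hb : 1 ≤ ‖b‖) (hy : ∀ k, y (k + 2) = (a + b) • y (k + 1) - (a * b) • y k)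
    (hlim : Tendsto y atTop (𝓝 0)) : y = 0 := by
  have hfactor : (fun k => y (k + 1) - b • y k) = 0 := by
    refine eq_zero_of_tendsto_zero_of_succ_eq_smul ha (fun k => ?_) ?_
    · rw [hy]
      module
    · simpa using (hlim.comp (tendsto_add_atTop_nat 1)).sub (hlim.const_smul b)
  exact eq_zero_of_tendsto_zero_of_succ_eq_smul hb
    (fun k => sub_eq_zero.1 (congrFun hfactor k)) hlim

end Recurrence

theorem exists_norm_le_one_add_inv_eq (μ : ℂ) : ∃ z : ℂ, z ≠ 0 ∧ ‖z‖ ≤ 1 ∧ z + z⁻¹ = μ := by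
  obtain ⟨w, hw⟩ := IsAlgClosed.exists_pow_nat_eq (μ ^ 2 - 4) two_pos
  have hmul : (μ + w) / 2 * ((μ - w) / 2) = 1 := by linear_combination (-1 / 4) * hw
  have hinv : ((μ + w) / 2)⁻¹ = (μ - w) / 2 := inv_eq_of_mul_eq_one_right hmul
  have hne : (μ + w) / 2 ≠ 0 := left_ne_zero_of_mul_eq_one hmul
  have hsum : (μ + w) / 2 + ((μ + w) / 2)⁻¹ = μ := by rw [hinv]; ring
  rcases le_total ‖(μ + w) / 2‖ 1 with h | h
  · exact ⟨_, hne, h, hsum⟩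
  · refine ⟨((μ + w) / 2)⁻¹, inv_ne_zero hne, ?_, ?_⟩
    · rw [norm_inv]
      exact inv_le_one_of_one_le₀ h
    · rw [inv_inv, add_comm, hsum]

theorem image_two_mul_cos_Icc : (fun θ => 2 * Real.cos θ) '' Icc 0 (2 * π) = Icc (-2) 2 := by
  ext t
  constructor
  · rintro ⟨θ, -, rfl⟩
    constructor <;> linarith [Real.neg_one_le_cos θ, Real.cos_le_one θ]
  · rintro ⟨h₁, h₂⟩
    refine ⟨Real.arccos (t / 2), ⟨Real.arccos_nonneg _, ?_⟩, ?_⟩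
    · linarith [Real.arccos_le_pi (t / 2), Real.pi_pos]
    · simp only [Real.cos_arccos (by linarith : -1 ≤ t / 2) (by linarith)]
      ring

theorem image_add_inv_sphere :
    (fun z : ℂ => z + z⁻¹) '' sphere 0 1 = Complex.ofReal '' Icc (-2) 2 := by
  ext μ
  constructor
  · rintro ⟨z, hz, rfl⟩
    rw [mem_sphere_zero_iff_norm] at hz
    have hre : |z.re| ≤ 1 := hz ▸ Complex.abs_re_le_norm z
    refine ⟨2 * z.re, ?_, ?_⟩
    · constructor <;> linarith [abs_le.1 hre]
    · simp only [Complex.inv_eq_conj hz, Complex.add_conj]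
  · rw [← image_two_mul_cos_Icc]
    rintro ⟨_, ⟨θ, -, rfl⟩, rfl⟩
    refine ⟨Complex.exp (θ * Complex.I), by simp [Complex.norm_exp_ofReal_mul_I], ?_⟩
    simp only [← Complex.exp_neg, ← neg_mul, Complex.ofReal_mul, Complex.ofReal_ofNat,
      Complex.ofReal_cos, Complex.two_cos]

section Factorization

variable {𝕜 A : Type*}

theorem add_add_sub_add_inv_smul_one [Field 𝕜] [Ring A] [Algebra 𝕜 A] {S L P : A}
    (hLS : L * S = 1) (hPS : P * S = 0) (hLP : L * P = 0) {z : 𝕜} (hz : z ≠ 0) :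
    S + L + P - (z + z⁻¹) • (1 : A) =
      -z⁻¹ • ((1 - z • L) * ((1 - z • P) * (1 - z • S))) := by
  have hexpand : (1 - z • L) * ((1 - z • P) * (1 - z • S)) =
      (1 + z * z) • (1 : A) - z • (S + L + P) := by
    simp only [mul_sub, sub_mul, mul_one, one_mul, smul_mul_smul_comm, hLS, hPS, hLP,
      smul_zero, mul_zero]
    module
  have hsq : z⁻¹ * (1 + z * z) = z + z⁻¹ := by field_simp; ring
  rw [hexpand, neg_smul, smul_sub, smul_smul, smul_smul, hsq, inv_mul_cancel₀ hz, one_smul]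
  abel

theorem isUnit_add_add_sub_add_inv_smul_one [NormedField 𝕜] [NormedRing A] [NormedAlgebra 𝕜 A]
    [HasSummableGeomSeries A] {S L P : A} (hLS : L * S = 1) (hPS : P * S = 0) (hLP : L * P = 0)
    (hS : ‖S‖ ≤ 1) (hL : ‖L‖ ≤ 1) (hP : ‖P‖ ≤ 1) {z : 𝕜} (hz : z ≠ 0) (hz₁ : ‖z‖ < 1) :
    IsUnit (S + L + P - (z + z⁻¹) • (1 : A)) := by
  have hunit : ∀ B : A, ‖B‖ ≤ 1 → IsUnit (1 - z • B) := fun B hB =>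
    isUnit_one_sub_of_norm_lt_one <|
      (norm_smul_le z B).trans_lt ((mul_le_of_le_one_right (norm_nonneg z) hB).trans_lt hz₁)
  rw [add_add_sub_add_inv_smul_one hLS hPS hLP hz]
  exact ((hunit L hL).mul ((hunit P hP).mul (hunit S hS))).smul
    (Units.mk0 (-z⁻¹) (neg_ne_zero.2 (inv_ne_zero hz)))

end Factorization

theorem denseRange_of_forall_dual_comp_eq_zero {𝕜 E F : Type*} [RCLike 𝕜]
    [AddCommGroup E] [Module 𝕜 E] [TopologicalSpace E] [NormedAddCommGroup F] [NormedSpace 𝕜 F]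
    (A : E →L[𝕜] F) (h : ∀ φ : F →L[𝕜] 𝕜, φ ∘L A = 0 → φ = 0) : DenseRange A := by
  let R : Submodule 𝕜 F := A.range.topologicalClosure
  have : IsClosed (R : Set F) := A.range.isClosed_topologicalClosure
  have hcomp : R.mkQL ∘L A = 0 := ContinuousLinearMap.ext fun x =>
    (Submodule.Quotient.mk_eq_zero R).2 (A.range.le_topologicalClosure ⟨x, rfl⟩)
  have hquot : ∀ y : F, R.mkQL y = 0 := fun y =>
    SeparatingDual.eq_zero_of_forall_dual_eq_zero (R := 𝕜) fun ψ =>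
      DFunLike.congr_fun (h (ψ ∘L R.mkQL) (by
        rw [ContinuousLinearMap.comp_assoc, hcomp, ContinuousLinearMap.comp_zero])) y
  exact fun y => (Submodule.Quotient.mk_eq_zero R).1 (hquot y)

theorem tendsto_cofinite_zero_of_memℓp {ι E : Type*} [NormedAddCommGroup E] {p : ℝ≥0∞}
    (hp : 0 < p.toReal) {f : ι → E} (hf : Memℓp f p) : Tendsto f cofinite (𝓝 0) := by
  have h := (hf.summable hp).tendsto_cofinite_zero.rpow_const
    (p := p.toReal⁻¹) (Or.inr (inv_nonneg.2 hp.le))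
  simp only [Real.rpow_rpow_inv (norm_nonneg _) hp.ne', Real.zero_rpow (inv_ne_zero hp.ne')] at h
  exact tendsto_zero_iff_norm_tendsto_zero.2 h

section Dual

variable {𝕜 ι : Type*} {E : ι → Type*} {p q : ℝ≥0∞} [RCLike 𝕜] [DecidableEq ι]
  [∀ i, NormedAddCommGroup (E i)] [∀ i, NormedSpace 𝕜 (E i)] [Fact (1 ≤ p)]

theorem sum_norm_apply_single_le (hp : 0 < p.toReal) (φ : lp E p →L[𝕜] 𝕜) (a : ∀ i, E i)
    (s : Finset ι) :
    ∑ i ∈ s, ‖φ (lp.single p i (a i))‖ ≤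
      ‖φ‖ * (∑ i ∈ s, ‖a i‖ ^ p.toReal) ^ p.toReal⁻¹ := by
  choose c hc_norm hc using fun i => RCLike.exists_norm_eq_mul_self (φ (lp.single p i (a i)))
  have hval : φ (∑ i ∈ s, lp.single p i (c i • a i)) =
      ((∑ i ∈ s, ‖φ (lp.single p i (a i))‖ : ℝ) : 𝕜) := by
    simp only [map_sum, lp.single_smul, map_smul, smul_eq_mul, hc]
  have hnorm : ‖∑ i ∈ s, lp.single p i (c i • a i)‖ =
      (∑ i ∈ s, ‖a i‖ ^ p.toReal) ^ p.toReal⁻¹ := by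
    have h := lp.norm_sum_single hp (fun i => c i • a i) s
    simp only [norm_smul, hc_norm, one_mul] at h
    rw [← h, Real.rpow_rpow_inv (norm_nonneg _) hp.ne']
  calc ∑ i ∈ s, ‖φ (lp.single p i (a i))‖
      = ‖φ (∑ i ∈ s, lp.single p i (c i • a i))‖ := by
        rw [hval, RCLike.norm_ofReal, abs_of_nonneg (by positivity)]
    _ ≤ ‖φ‖ * (∑ i ∈ s, ‖a i‖ ^ p.toReal) ^ p.toReal⁻¹ := hnorm ▸ φ.le_opNorm _

theorem le_rpow_of_le_mul_rpow_inv {x K a b : ℝ} (hab : a.HolderConjugate b) (hx : 0 ≤ x)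
    (hK : 0 ≤ K) (h : x ≤ K * x ^ a⁻¹) : x ≤ K ^ b := by
  rcases hx.eq_or_lt with rfl | hx
  · positivity
  have hsplit : x ^ b⁻¹ * x ^ a⁻¹ = x := by
    rw [← Real.rpow_add hx, add_comm, hab.inv_add_inv_eq_one, Real.rpow_one]
  refine (Real.rpow_inv_le_iff_of_pos hx.le hK hab.symm.pos).1 ?_
  exact le_of_mul_le_mul_right (hsplit.trans_le h) (by positivity)

theorem memℓp_apply_single (hpq : p.toReal.HolderConjugate q.toReal) (φ : lp E p →L[𝕜] 𝕜)
    {a : ∀ i, E i} {C : ℝ} (ha : ∀ i, ‖a i‖ ≤ C) :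
    Memℓp (fun i => φ (lp.single p i (a i))) q := by
  rcases isEmpty_or_nonempty ι with _ | ⟨⟨i₀⟩⟩
  · exact Memℓp.all _
  have hC : 0 ≤ C := (norm_nonneg _).trans (ha i₀)
  set c : ι → 𝕜 := fun i => φ (lp.single p i (a i))
  refine memℓp_gen' (C := (‖φ‖ * C) ^ q.toReal) fun s => ?_
  -- Equality in Hölder's inequality: test `φ` on the coefficients `‖c i‖ ^ (q - 1)`.
  let b : ∀ i, E i := fun i => ((‖c i‖ ^ (q.toReal - 1) : ℝ) : 𝕜) • a i
  have hφb : ∀ i, ‖φ (lp.single p i (b i))‖ = ‖c i‖ ^ q.toReal := fun i => by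
    rw [lp.single_smul, map_smul, norm_smul, RCLike.norm_ofReal, abs_of_nonneg (by positivity),
      ← Real.rpow_add_one' (norm_nonneg _) (by simp [hpq.symm.ne_zero]), sub_add_cancel]
  have hb : ∀ i, ‖b i‖ ^ p.toReal ≤ C ^ p.toReal * ‖c i‖ ^ q.toReal := fun i => by
    rw [norm_smul, RCLike.norm_ofReal, abs_of_nonneg (by positivity),
      Real.mul_rpow (by positivity) (norm_nonneg _), ← Real.rpow_mul (norm_nonneg _),
      hpq.symm.sub_one_mul_conj, mul_comm]
    gcongr
    exact ha i
  refine le_rpow_of_le_mul_rpow_inv hpq (by positivity) (by positivity) ?_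
  calc ∑ i ∈ s, ‖c i‖ ^ q.toReal
      = ∑ i ∈ s, ‖φ (lp.single p i (b i))‖ := by simp only [hφb]
    _ ≤ ‖φ‖ * (∑ i ∈ s, ‖b i‖ ^ p.toReal) ^ p.toReal⁻¹ := sum_norm_apply_single_le hpq.pos φ b s
    _ ≤ ‖φ‖ * (C ^ p.toReal * ∑ i ∈ s, ‖c i‖ ^ q.toReal) ^ p.toReal⁻¹ := by
        rw [Finset.mul_sum]
        gcongr
        exact hb _
    _ = ‖φ‖ * C * (∑ i ∈ s, ‖c i‖ ^ q.toReal) ^ p.toReal⁻¹ := by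
        rw [Real.mul_rpow (by positivity) (by positivity), Real.rpow_rpow_inv hC hpq.ne_zero,
          mul_assoc]

theorem tendsto_apply_single_cofinite_zero (hp : 1 < p) (hp' : p ≠ ∞) (φ : lp E p →L[𝕜] 𝕜)
    {a : ∀ i, E i} {C : ℝ} (ha : ∀ i, ‖a i‖ ≤ C) :
    Tendsto (fun i => φ (lp.single p i (a i))) cofinite (𝓝 0) := by
  have hp₁ : 1 < p.toReal := by
    simpa using (ENNReal.toReal_lt_toReal ENNReal.one_ne_top hp').2 hp
  have hpq := Real.HolderConjugate.conjExponent hp₁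
  rw [← ENNReal.toReal_ofReal hpq.symm.nonneg] at hpq
  exact tendsto_cofinite_zero_of_memℓp hpq.symm.pos (memℓp_apply_single hpq φ ha)

end Dual

section Shift

variable {𝕜 E : Type*} {p : ℝ≥0∞} [NontriviallyNormedField 𝕜] [NormedAddCommGroup E]
  [NormedSpace 𝕜 E] [Fact (1 ≤ p)]

theorem memℓp_succ_iff (f : ℕ → E) : Memℓp (fun k => f (k + 1)) p ↔ Memℓp f p := by
  rcases ENNReal.dichotomy p with rfl | hp
  · rw [memℓp_infty_iff, memℓp_infty_iff, bddAbove_def, bddAbove_def]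
    simp only [forall_mem_range]
    refine ⟨fun ⟨C, hC⟩ => ⟨max ‖f 0‖ C, fun k => ?_⟩, fun ⟨C, hC⟩ => ⟨C, fun k => hC (k + 1)⟩⟩
    cases k with
    | zero => exact le_max_left _ _
    | succ k => exact (hC k).trans (le_max_right _ _)
  · have hp₀ := zero_lt_one.trans_le hp
    rw [memℓp_gen_iff hp₀, memℓp_gen_iff hp₀]
    exact summable_nat_add_iff (f := fun k => ‖f k‖ ^ p.toReal) 1

theorem norm_succ_le {f g : ℓ^p(ℕ, E)} (h : ∀ k, g k = f (k + 1)) : ‖g‖ ≤ ‖f‖ := by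
  rcases ENNReal.dichotomy p with rfl | hp
  · refine lp.norm_le_of_forall_le (norm_nonneg f) fun k => ?_
    rw [h]
    exact lp.norm_apply_le_norm ENNReal.top_ne_zero f (k + 1)
  · have hp₀ := zero_lt_one.trans_le hp
    refine lp.norm_le_of_tsum_le hp₀ (norm_nonneg f) ?_
    rw [lp.norm_rpow_eq_tsum hp₀, ((lp.memℓp f).summable hp₀).tsum_eq_zero_add]
    simp only [h]
    exact le_add_of_nonneg_left (by positivity)

theorem norm_le_succ {f g : ℓ^p(ℕ, E)} (h₀ : f 0 = 0) (h : ∀ k, g k = f (k + 1)) :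
    ‖f‖ ≤ ‖g‖ := by
  rcases ENNReal.dichotomy p with rfl | hp
  · refine lp.norm_le_of_forall_le (norm_nonneg g) fun k => ?_
    cases k with
    | zero => simp [h₀]
    | succ k => exact h k ▸ lp.norm_apply_le_norm ENNReal.top_ne_zero g k
  · have hp₀ := zero_lt_one.trans_le hp
    refine lp.norm_le_of_tsum_le hp₀ (norm_nonneg g) ?_
    rw [lp.norm_rpow_eq_tsum hp₀, ((lp.memℓp f).summable hp₀).tsum_eq_zero_add]
    simp [h, h₀, Real.zero_rpow hp₀.ne']

variable (𝕜 E p)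

/-- The left shift `(f₀, f₁, …) ↦ (f₁, f₂, …)` on `ℓ^p`. -/
noncomputable def leftShift : ℓ^p(ℕ, E) →L[𝕜] ℓ^p(ℕ, E) :=
  LinearMap.mkContinuous
    { toFun := fun f => ⟨fun k => f (k + 1), (memℓp_succ_iff f).2 (lp.memℓp f)⟩
      map_add' := fun _ _ => rfl
      map_smul' := fun _ _ => rfl }
    1 fun f => by
      rw [one_mul]
      exact norm_succ_le fun _ => rfl

/-- The right shift `(f₀, f₁, …) ↦ (0, f₀, f₁, …)` on `ℓ^p`. -/
noncomputable def rightShift : ℓ^p(ℕ, E) →L[𝕜] ℓ^p(ℕ, E) :=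
  LinearMap.mkContinuous
    { toFun := fun f => ⟨fun k => Nat.casesOn (motive := fun _ => E) k 0 f,
        (memℓp_succ_iff _).1 (lp.memℓp f)⟩
      map_add' := fun f g => by
        ext (_ | k)
        · exact (add_zero (0 : E)).symm
        · rfl
      map_smul' := fun c f => by
        ext (_ | k)
        · exact (smul_zero c).symm
        · rfl }
    1 fun f => by
      rw [one_mul]
      exact norm_le_succ rfl fun _ => rfl

/-- The projection `(f₀, f₁, …) ↦ (f₀, 0, 0, …)` of `ℓ^p` onto the zeroth coordinate. -/
noncomputable def zerothProj : ℓ^p(ℕ, E) →L[𝕜] ℓ^p(ℕ, E) :=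
  lp.singleContinuousLinearMap 𝕜 (fun _ : ℕ => E) p 0 ∘L lp.evalCLM 𝕜 (fun _ : ℕ => E) p 0

variable {𝕜 E p}

@[simp]
theorem leftShift_apply (f : ℓ^p(ℕ, E)) (k : ℕ) : leftShift 𝕜 E p f k = f (k + 1) := rfl

@[simp]
theorem rightShift_apply_zero (f : ℓ^p(ℕ, E)) : rightShift 𝕜 E p f 0 = 0 := rfl

@[simp]
theorem rightShift_apply_succ (f : ℓ^p(ℕ, E)) (k : ℕ) : rightShift 𝕜 E p f (k + 1) = f k := rfl

@[simp]
theorem zerothProj_apply (f : ℓ^p(ℕ, E)) : zerothProj 𝕜 E p f = lp.single p 0 (f 0) := rfl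

theorem norm_leftShift_le : ‖leftShift 𝕜 E p‖ ≤ 1 :=
  LinearMap.mkContinuous_norm_le _ zero_le_one _

theorem norm_rightShift_le : ‖rightShift 𝕜 E p‖ ≤ 1 :=
  LinearMap.mkContinuous_norm_le _ zero_le_one _

theorem norm_zerothProj_le : ‖zerothProj 𝕜 E p‖ ≤ 1 := by
  have hp : 0 < p := zero_lt_one.trans_le Fact.out
  refine ContinuousLinearMap.opNorm_le_bound _ zero_le_one fun f => ?_
  rw [one_mul, zerothProj_apply, lp.norm_single hp]
  exact lp.norm_apply_le_norm hp.ne' f 0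

theorem leftShift_mul_rightShift : leftShift 𝕜 E p * rightShift 𝕜 E p = 1 := rfl

theorem zerothProj_mul_rightShift : zerothProj 𝕜 E p * rightShift 𝕜 E p = 0 := by
  ext f k
  simp

theorem leftShift_mul_zerothProj : leftShift 𝕜 E p * zerothProj 𝕜 E p = 0 := by
  ext f k
  simp

end Shift

section HalfLine

/-- The adjacency operator `(f₀, f₁, f₂, …) ↦ (f₀ + f₁, f₀ + f₂, f₁ + f₃, …)` on `ℓ^p` of the
half-line graph on `ℕ` with a loop at `0`. -/
noncomputable def halfLineAdj (𝕜 E : Type*) (p : ℝ≥0∞) [NontriviallyNormedField 𝕜]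
    [NormedAddCommGroup E] [NormedSpace 𝕜 E] [Fact (1 ≤ p)] : ℓ^p(ℕ, E) →L[𝕜] ℓ^p(ℕ, E) :=
  rightShift 𝕜 E p + leftShift 𝕜 E p + zerothProj 𝕜 E p

section NontriviallyNormedField

variable {𝕜 E : Type*} {p : ℝ≥0∞} [NontriviallyNormedField 𝕜] [NormedAddCommGroup E]
  [NormedSpace 𝕜 E] [Fact (1 ≤ p)]

theorem halfLineAdj_apply_zero (f : ℓ^p(ℕ, E)) : halfLineAdj 𝕜 E p f 0 = f 0 + f 1 := by
  simp [halfLineAdj, add_comm]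

theorem halfLineAdj_apply_succ (f : ℓ^p(ℕ, E)) (k : ℕ) :
    halfLineAdj 𝕜 E p f (k + 1) = f k + f (k + 2) := by
  simp [halfLineAdj]

theorem halfLineAdj_single_succ (k : ℕ) (v : E) :
    halfLineAdj 𝕜 E p (lp.single p (k + 1) v) = lp.single p k v + lp.single p (k + 2) v := by
  ext (_ | j)
  · simp [halfLineAdj_apply_zero, Pi.single_apply, eq_comm]
  · simp [halfLineAdj_apply_succ, Pi.single_apply, add_comm]

theorem isUnit_halfLineAdj_sub_smul_one [CompleteSpace E] {z : 𝕜} (hz : z ≠ 0) (hz₁ : ‖z‖ < 1) :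
    IsUnit (halfLineAdj 𝕜 E p - (z + z⁻¹) • 1) :=
  isUnit_add_add_sub_add_inv_smul_one leftShift_mul_rightShift zerothProj_mul_rightShift
    leftShift_mul_zerothProj norm_rightShift_le norm_leftShift_le norm_zerothProj_le hz hz₁

theorem eq_zero_of_halfLineAdj_sub_smul_one_apply_succ (hp : p ≠ ∞) {z : 𝕜} (hz : ‖z‖ = 1)
    {f : ℓ^p(ℕ, E)} (hf : ∀ k, (halfLineAdj 𝕜 E p - (z + z⁻¹) • 1) f (k + 1) = 0) : f = 0 := by
  have hz₀ : z ≠ 0 := norm_ne_zero_iff.1 (hz ▸ one_ne_zero)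
  have hp₀ : 0 < p.toReal := ENNReal.toReal_pos (zero_lt_one.trans_le Fact.out).ne' hp
  refine lp.ext (eq_zero_of_tendsto_zero_of_linear_recurrence (a := z) (b := z⁻¹) hz.ge
    (by rw [norm_inv, hz, inv_one]) (fun k => ?_) ?_)
  · have h : f k + f (k + 2) - (z + z⁻¹) • f (k + 1) = 0 :=
      halfLineAdj_apply_succ (𝕜 := 𝕜) f k ▸ hf k
    rw [mul_inv_cancel₀ hz₀, one_smul, eq_sub_iff_add_eq', ← sub_eq_zero]
    exact h
  · exact Nat.cofinite_eq_atTop ▸ tendsto_cofinite_zero_of_memℓp hp₀ (lp.memℓp f)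

theorem injective_halfLineAdj_sub_smul_one (hp : p ≠ ∞) {z : 𝕜} (hz : ‖z‖ = 1) :
    Function.Injective ⇑(halfLineAdj 𝕜 E p - (z + z⁻¹) • 1) :=
  (injective_iff_map_eq_zero _).2 fun f hf =>
    eq_zero_of_halfLineAdj_sub_smul_one_apply_succ hp hz fun k => by rw [hf]; rfl

theorem not_surjective_halfLineAdj_sub_smul_one [Nontrivial E] (hp : p ≠ ∞) {z : 𝕜}
    (hz : ‖z‖ = 1) : ¬ Function.Surjective ⇑(halfLineAdj 𝕜 E p - (z + z⁻¹) • 1) := by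
  intro hsurj
  obtain ⟨v, hv⟩ := exists_ne (0 : E)
  obtain ⟨f, hf⟩ := hsurj (lp.single p 0 v)
  have hf₀ : f = 0 :=
    eq_zero_of_halfLineAdj_sub_smul_one_apply_succ hp hz fun k => by rw [hf]; simp
  rw [hf₀, map_zero] at hf
  exact hv (by simpa using (congrFun (congrArg Subtype.val hf) 0).symm)

end NontriviallyNormedField

theorem denseRange_halfLineAdj_sub_smul_one {𝕜 E : Type*} {p : ℝ≥0∞} [RCLike 𝕜]
    [NormedAddCommGroup E] [NormedSpace 𝕜 E] [Fact (1 ≤ p)] (hp : 1 < p) (hp' : p ≠ ∞) {z : 𝕜}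
    (hz : ‖z‖ = 1) : DenseRange ⇑(halfLineAdj 𝕜 E p - (z + z⁻¹) • 1) := by
  have hz₀ : z ≠ 0 := norm_ne_zero_iff.1 (hz ▸ one_ne_zero)
  refine denseRange_of_forall_dual_comp_eq_zero _ fun φ hφ => ?_
  have hcoord : ∀ v : E, (fun k => φ (lp.single p k v)) = 0 := fun v => by
    refine eq_zero_of_tendsto_zero_of_linear_recurrence (a := z) (b := z⁻¹) hz.ge
      (by rw [norm_inv, hz, inv_one]) (fun k => ?_) ?_
    · have h : φ (halfLineAdj 𝕜 E p (lp.single p (k + 1) v) -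
          (z + z⁻¹) • lp.single p (k + 1) v) = 0 := DFunLike.congr_fun hφ _
      rw [halfLineAdj_single_succ, map_sub, map_add, map_smul] at h
      rw [mul_inv_cancel₀ hz₀, one_smul, eq_sub_iff_add_eq', ← sub_eq_zero]
      exact h
    · exact Nat.cofinite_eq_atTop ▸
        tendsto_apply_single_cofinite_zero hp hp' φ fun _ => le_refl ‖v‖
  exact lp.ext_continuousLinearMap hp' fun k =>
    ContinuousLinearMap.ext fun v => congrFun (hcoord v) k

section Complex

variable {E : Type*} {p : ℝ≥0∞} [NormedAddCommGroup E] [NormedSpace ℂ E] [CompleteSpace E]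
  [Fact (1 ≤ p)]

theorem spectrum_halfLineAdj [Nontrivial E] (hp : p ≠ ∞) :
    spectrum ℂ (halfLineAdj ℂ E p) = (fun z : ℂ => z + z⁻¹) '' sphere 0 1 := by
  ext μ
  rw [spectrum.mem_iff, Algebra.algebraMap_eq_smul_one, ← IsUnit.neg_iff, neg_sub]
  constructor
  · intro hμ
    obtain ⟨z, hz, hz_le, rfl⟩ := exists_norm_le_one_add_inv_eq μ
    have hz₁ : ‖z‖ = 1 :=
      hz_le.eq_or_lt.resolve_right fun h => hμ (isUnit_halfLineAdj_sub_smul_one hz h)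
    exact ⟨z, mem_sphere_zero_iff_norm.2 hz₁, rfl⟩
  · rintro ⟨z, hz, rfl⟩ hunit
    exact not_surjective_halfLineAdj_sub_smul_one hp (mem_sphere_zero_iff_norm.1 hz)
      (ContinuousLinearMap.isUnit_iff_bijective.1 hunit).2

theorem injective_halfLineAdj_sub (hp : p ≠ ∞) (μ : ℂ) :
    Function.Injective ⇑(halfLineAdj ℂ E p - μ • 1) := by
  obtain ⟨z, hz, hz_le, rfl⟩ := exists_norm_le_one_add_inv_eq μ
  rcases hz_le.eq_or_lt with hz₁ | hz₁
  · exact injective_halfLineAdj_sub_smul_one hp hz₁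
  · exact (ContinuousLinearMap.isUnit_iff_bijective.1
      (isUnit_halfLineAdj_sub_smul_one hz hz₁)).1

theorem denseRange_halfLineAdj_sub (hp : 1 < p) (hp' : p ≠ ∞) (μ : ℂ) :
    DenseRange ⇑(halfLineAdj ℂ E p - μ • 1) := by
  obtain ⟨z, hz, hz_le, rfl⟩ := exists_norm_le_one_add_inv_eq μ
  rcases hz_le.eq_or_lt with hz₁ | hz₁
  · exact denseRange_halfLineAdj_sub_smul_one hp hp' hz₁
  · exact (ContinuousLinearMap.isUnit_iff_bijective.1
      (isUnit_halfLineAdj_sub_smul_one hz hz₁)).2.denseRange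

end Complex

end HalfLine

section BV

theorem dL_zero (x : ℕ → ℂ) : dL x 0 = x 0 := by simp [dL]

theorem dL_succ (x : ℕ → ℂ) (k : ℕ) : dL x (k + 1) = x (k + 1) - x k := rfl

theorem Ufun_zero (s r : ℂ) (x : ℕ → ℂ) : Ufun s r x 0 = r * x 0 + s * x 1 := by simp [Ufun]

theorem Ufun_succ (s r : ℂ) (x : ℕ → ℂ) (k : ℕ) :
    Ufun s r x (k + 1) = s * x k + r * x (k + 1) + s * x (k + 2) := rfl

theorem dLhat_surjective (p : ℝ≥0∞) : Function.Surjective (dLhat p) := by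
  intro f
  have hd : dL (fun k => ∑ i ∈ Finset.range (k + 1), f i) = f := by
    ext (_ | k)
    · simp [dL_zero]
    · simp [dL_succ, Finset.sum_range_succ _ (k + 1)]
  exact ⟨⟨_, show Memℓp (dL _) p from hd.symm ▸ lp.memℓp f⟩, lp.ext hd⟩

/-- The difference operator as an isometric isomorphism `bv_p ≃ ℓ^p`. -/
noncomputable def bvEquiv (p : ℝ≥0∞) [Fact (1 ≤ p)] : BV p ≃ₗᵢ[ℂ] ℓ^p(ℕ, ℂ) :=
  LinearIsometryEquiv.ofSurjective ⟨dLhat p, fun _ => rfl⟩ (dLhat_surjective p)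

/-- Conjugation by the difference operator, carrying the operators on `ℓ^p` to those on `bv_p`. -/
noncomputable def bvConj (p : ℝ≥0∞) [Fact (1 ≤ p)] :
    (ℓ^p(ℕ, ℂ) →L[ℂ] ℓ^p(ℕ, ℂ)) ≃ₐ[ℂ] (BV p →L[ℂ] BV p) :=
  (bvEquiv p).symm.toContinuousLinearEquiv.conjContinuousAlgEquiv.toAlgEquiv

variable {p : ℝ≥0∞} [Fact (1 ≤ p)]

theorem bvEquiv_apply (x : BV p) (k : ℕ) : bvEquiv p x k = dL x.1 k := rfl

theorem injective_bvConj {A : ℓ^p(ℕ, ℂ) →L[ℂ] ℓ^p(ℕ, ℂ)} (hA : Function.Injective A) :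
    Function.Injective (bvConj p A) :=
  (bvEquiv p).symm.injective.comp (hA.comp (bvEquiv p).injective)

theorem denseRange_bvConj {A : ℓ^p(ℕ, ℂ) →L[ℂ] ℓ^p(ℕ, ℂ)} (hA : DenseRange A) :
    DenseRange (bvConj p A) :=
  (bvEquiv p).symm.surjective.denseRange.comp
    (hA.comp (bvEquiv p).surjective.denseRange A.continuous) (bvEquiv p).symm.continuous

variable {r s : ℂ} {T : BV p →L[ℂ] BV p}

theorem bvEquiv_apply_of_eq_Ufun (hT : ∀ (x : BV p) (k : ℕ), (T x).1 k = Ufun s r x.1 k)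
    (x : BV p) : bvEquiv p (T x) = r • bvEquiv p x + s • halfLineAdj ℂ ℂ p (bvEquiv p x) := by
  ext k
  change bvEquiv p (T x) k = r * bvEquiv p x k + s * halfLineAdj ℂ ℂ p (bvEquiv p x) k
  rcases k with _ | _ | k
  · simp only [halfLineAdj_apply_zero, bvEquiv_apply, dL_zero, dL_succ, hT, Ufun_zero, zero_add]
    ring
  · simp only [halfLineAdj_apply_succ, bvEquiv_apply, dL_zero, dL_succ, hT, Ufun_zero, Ufun_succ,
      zero_add]
    ring
  · simp only [halfLineAdj_apply_succ, bvEquiv_apply, dL_succ, hT, Ufun_succ]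
    ring

theorem eq_bvConj_of_eq_Ufun (hT : ∀ (x : BV p) (k : ℕ), (T x).1 k = Ufun s r x.1 k) :
    T = bvConj p (r • 1 + s • halfLineAdj ℂ ℂ p) :=
  ContinuousLinearMap.ext fun x =>
    (bvEquiv p).toEquiv.eq_symm_apply.2 (bvEquiv_apply_of_eq_Ufun hT x)

theorem sub_smul_one_eq_bvConj (hs : s ≠ 0)
    (hT : ∀ (x : BV p) (k : ℕ), (T x).1 k = Ufun s r x.1 k) (lam : ℂ) :
    T - lam • 1 = bvConj p (s • (halfLineAdj ℂ ℂ p - ((lam - r) / s) • 1)) := by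
  rw [eq_bvConj_of_eq_Ufun hT, ← map_one (bvConj p), ← map_smul, ← map_sub, smul_sub, smul_smul,
    mul_div_cancel₀ _ hs]
  congr 1
  module

theorem spectrum_of_eq_Ufun (hs : s ≠ 0) (hp : p ≠ ∞)
    (hT : ∀ (x : BV p) (k : ℕ), (T x).1 k = Ufun s r x.1 k) :
    spectrum ℂ T = (fun t : ℝ => r + t * s) '' Icc (-2) 2 := by
  have hT' : T = bvConj p (algebraMap ℂ _ r + Units.mk0 s hs • halfLineAdj ℂ ℂ p) :=
    Algebra.algebraMap_eq_smul_one (A := ℓ^p(ℕ, ℂ) →L[ℂ] ℓ^p(ℕ, ℂ)) r ▸ eq_bvConj_of_eq_Ufun hT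
  rw [hT', AlgEquiv.spectrum_eq, ← spectrum.vadd_eq, spectrum.unit_smul_eq_smul,
    spectrum_halfLineAdj hp, image_add_inv_sphere, ← image_smul, ← image_vadd, image_image,
    image_image]
  simp only [Units.smul_mk0, smul_eq_mul, vadd_eq_add, mul_comm s]

theorem injective_sub_smul_one_of_eq_Ufun (hs : s ≠ 0) (hp : p ≠ ∞)
    (hT : ∀ (x : BV p) (k : ℕ), (T x).1 k = Ufun s r x.1 k) (lam : ℂ) :
    Function.Injective ⇑(T - lam • 1) := by
  rw [sub_smul_one_eq_bvConj hs hT]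
  exact injective_bvConj ((smul_right_injective _ hs).comp (injective_halfLineAdj_sub hp _))

theorem denseRange_sub_smul_one_of_eq_Ufun (hs : s ≠ 0) (hp : 1 < p) (hp' : p ≠ ∞)
    (hT : ∀ (x : BV p) (k : ℕ), (T x).1 k = Ufun s r x.1 k) (lam : ℂ) :
    DenseRange ⇑(T - lam • 1) := by
  rw [sub_smul_one_eq_bvConj hs hT]
  exact denseRange_bvConj ((MulAction.surjective₀ hs).denseRange.comp
    (denseRange_halfLineAdj_sub hp hp' _) (continuous_const_smul s))

end BV

theorem stmt18_general (r s : ℂ) (hs : s ≠ 0) (p : ℝ≥0∞) (hp : 1 < p) (hp' : p ≠ ∞)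
    [Fact (1 ≤ p)] (T : BV p →L[ℂ] BV p)
    (hT : ∀ (x : BV p) (k : ℕ), (T x).1 k = Ufun s r x.1 k) :
    spectrum ℂ T = {lam : ℂ | ∃ t ∈ Icc (-2 : ℝ) 2, lam = r + t * s} ∧
    spectrum ℂ T =
      {lam : ℂ | ∃ θ ∈ Icc (0 : ℝ) (2 * π), lam = r + 2 * s * Real.cos θ} ∧
    (∀ lam : ℂ, Function.Injective ⇑(T - lam • 1)) ∧
    (∀ lam ∈ spectrum ℂ T, DenseRange ⇑(T - lam • 1)) := by
  have hspec := spectrum_of_eq_Ufun hs hp' hT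
  refine ⟨?_, ?_, injective_sub_smul_one_of_eq_Ufun hs hp' hT,
    fun lam _ => denseRange_sub_smul_one_of_eq_Ufun hs hp hp' hT lam⟩
  · rw [hspec]
    simp only [image, eq_comm]
  · rw [hspec, ← image_two_mul_cos_Icc, image_image]
    simp only [image, eq_comm, Complex.ofReal_mul, Complex.ofReal_ofNat, mul_right_comm]

/-- The spectrum of U(s,r,s) on bv_p is the segment
[r − 2s, r + 2s] = {r + 2s cos θ : θ ∈ [0, 2π]}, and it coincides with the
continuous spectrum: U − λI is always injective (empty point spectrum) and has
dense range for every λ in the spectrum (empty residual spectrum). -/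
theorem stmt18 (r s : ℝ) (hs : s ≠ 0) (p : ℝ≥0∞) (hp : 1 < p) (hp' : p ≠ ∞)
    [Fact (1 ≤ p)] (T : BV p →L[ℂ] BV p)
    (hT : ∀ (x : BV p) (k : ℕ), (T x).1 k = Ufun (s : ℂ) (r : ℂ) x.1 k) :
    spectrum ℂ T = {lam : ℂ | ∃ t ∈ Icc (-2 : ℝ) 2, lam = r + t * s} ∧
    spectrum ℂ T =
      {lam : ℂ | ∃ θ ∈ Icc (0 : ℝ) (2 * π), lam = r + 2 * s * Real.cos θ} ∧
    (∀ lam : ℂ, Function.Injective ⇑(T - lam • 1)) ∧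
    (∀ lam ∈ spectrum ℂ T, DenseRange ⇑(T - lam • 1)) :=
  stmt18_general r s (Complex.ofReal_ne_zero.2 hs) p hp hp' T hT
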